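/- For every η ∈ ℂ, the subspace R_η of the complex vector space of functions ℂ² → ℂ, defined as the linear span of the functions F_η(a,b,c₁,c₂;·,·) over all (a,b,c₁,c₂) ∈ ℂ⁴, has dimension 6. -/

import Mathlib

/-!
Write `T₀, T₁` for the two theta series of modulus `2τ`. The addition formula
`θ(u)θ(v) = T₀(u+v)T₁(u-v) - T₁(u+v)T₀(u-v)` exhibits `θ(x+y)θ(x-y)` as a `2 × 2` determinant, so
the Plücker relation yields Weierstrass's three-term identity. The latter factors `F_η(a,b,c₁,c₂)`
as the constant `θ(c₁+c₂+a+b)θ(c₁-c₂)` times `θ(z₁-z₂+η)` times a translate of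
`θ(z₁+z₂-a-b) ∏ₖ θ(zₖ+a)θ(zₖ+b)`, which involves neither `η` nor `c₁, c₂`. Hence `dim R_η` does not
depend on `η`.

For `η = 0` the functions `F_η` are antisymmetrized products of two theta functions of degree four,
so `dim R_0 ≤ dim Λ²(ℂ⁴) = 6`. Conversely, let `w₀, …, w₃` be generic and put `a = -w_i`,
`b = -w_j`: the product above then vanishes at `(w_k, w_l)` exactly when `{i,j}` meets `{k,l}`, so
the six choices of `{i,j}` give linearly independent functions.
-/

open Complex

noncomputable section

/-- The Jacobi theta function `θ₁(z|τ)`. -/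
def θ (τ z : ℂ) : ℂ :=
  I * ∑' n : ℤ, (-1 : ℂ) ^ n * Complex.exp (Real.pi * I * τ * ((n : ℂ) - 1/2) ^ 2) *
    Complex.exp (Real.pi * I * (2 * (n : ℂ) - 1) * z)

/-- `f(α,β,γ;z) = θ(z+α)θ(z+β)θ(z+γ)θ(z−α−β−γ)`. -/
def fV (τ α β γ z : ℂ) : ℂ :=
  θ τ (z + α) * θ τ (z + β) * θ τ (z + γ) * θ τ (z - α - β - γ)

/-- The generating relation functions `F_η(a,b,c₁,c₂;z₁,z₂)`. -/
def Fη (τ η a b c₁ c₂ z₁ z₂ : ℂ) : ℂ :=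
  fV τ (a - η/2) (b - η/2) (c₁ + η/2) z₁ * fV τ (a + η/2) (b + η/2) (c₂ - η/2) z₂ -
  fV τ (a - η/2) (b - η/2) (c₂ + η/2) z₁ * fV τ (a + η/2) (b + η/2) (c₁ - η/2) z₂

/-- The relation space `R_η ⊂ V⊗V`, the span of the functions `F_η(a,b,c₁,c₂;·,·)`. -/
def Rspace (τ η : ℂ) : Submodule ℂ (ℂ × ℂ → ℂ) :=
  Submodule.span ℂ
    {F | ∃ a b c₁ c₂ : ℂ, F = fun p : ℂ × ℂ => Fη τ η a b c₁ c₂ p.1 p.2}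

section LinearAlgebra

variable {K M N ι : Type*} [Field K] [AddCommGroup M] [Module K M] [AddCommGroup N] [Module K N]

lemma linearIndependent_of_forall_exists_dual {v : ι → M}
    (h : ∀ i, ∃ f : Module.Dual K M, f (v i) ≠ 0 ∧ ∀ j ≠ i, f (v j) = 0) :
    LinearIndependent K v := by
  choose f hf_self hf_ne using h
  refine .of_pairwise_dual_eq_zero_one v (fun i ↦ (f i (v i))⁻¹ • f i) (fun i j hij ↦ ?_)
    fun i ↦ ?_
  · simp [hf_ne i j hij.symm]
  · simp [hf_self i]

lemma rank_span_alternatingMap_le {n : ℕ} (f : M [⋀^Fin n]→ₗ[K] N) (V : Submodule K M)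
    [FiniteDimensional K V] :
    Module.rank K (Submodule.span K {x | ∃ v : Fin n → M, (∀ i, v i ∈ V) ∧ f v = x}) ≤
      (Module.finrank K V).choose n := by
  let F := exteriorPower.alternatingMapLinearEquiv (f.compLinearMap V.subtype)
  have span_le : Submodule.span K {x | ∃ v : Fin n → M, (∀ i, v i ∈ V) ∧ f v = x} ≤
      LinearMap.range F := by
    refine Submodule.span_le.2 ?_
    rintro _ ⟨v, hv, rfl⟩
    exact ⟨exteriorPower.ιMulti K n fun i ↦ ⟨v i, hv i⟩,
      exteriorPower.alternatingMapLinearEquiv_apply_ιMulti _ _⟩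
  calc Module.rank K (Submodule.span K {x | ∃ v : Fin n → M, (∀ i, v i ∈ V) ∧ f v = x})
      ≤ Module.rank K (LinearMap.range F) := Submodule.rank_mono span_le
    _ = Module.finrank K (LinearMap.range F) := (Module.finrank_eq_rank _ _).symm
    _ ≤ Module.finrank K (⋀[K]^n V) := Nat.cast_le.2 F.finrank_range_le
    _ = (Module.finrank K V).choose n := by rw [exteriorPower.finrank_eq]

/-- The antisymmetrized product `g(x)h(y) - h(x)g(y)` of two functions of one variable, as an
alternating map in `(g, h)`: it is the determinant of the matrix of values. -/
def antisymmProd (K X : Type*) [Field K] : (X → K) [⋀^Fin 2]→ₗ[K] (X × X → K) :=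
  AlternatingMap.pi fun p ↦ Matrix.detRowAlternating.compLinearMap
    (LinearMap.pi ![LinearMap.proj p.1, LinearMap.proj p.2])

@[simp] lemma antisymmProd_apply {X : Type*} (g h : X → K) (p : X × X) :
    antisymmProd K X ![g, h] p = g p.1 * h p.2 - h p.1 * g p.2 := by
  have det_eq : antisymmProd K X ![g, h] p = Matrix.det !![g p.1, g p.2; h p.1, h p.2] := by
    refine congrArg (Matrix.det (n := Fin 2) (R := K)) ?_
    ext i j
    fin_cases i <;> fin_cases j <;> rfl
  rw [det_eq, Matrix.det_fin_two_of]
  ring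

end LinearAlgebra

section EntireFunctions

open scoped Topology

variable {f : ℂ → ℂ}

lemma eventually_ne_zero_of_differentiable (hf : Differentiable ℂ f) (hf0 : f ≠ 0) (c : ℂ) :
    ∀ᶠ z in 𝓝[≠] c, f z ≠ 0 := by
  contrapose! hf0
  exact AnalyticOnNhd.eq_of_frequently_eq (fun z _ ↦ hf.analyticAt z) analyticOnNhd_const hf0

lemma dense_setOf_ne_zero_of_differentiable (hf : Differentiable ℂ f) (hf0 : f ≠ 0) :
    Dense {z | f z ≠ 0} := fun c ↦
  mem_closure_iff_frequently.2 <|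
    (eventually_ne_zero_of_differentiable hf hf0 c).frequently.filter_mono nhdsWithin_le_nhds

lemma exists_forall_sub_ne_zero_and_sum_ne_zero (hf : Differentiable ℂ f) (hf0 : f ≠ 0) (n : ℕ)
    [NeZero n] :
    ∃ w : Fin n → ℂ, (∀ i j, i ≠ j → f (w i - w j) ≠ 0) ∧ f (∑ i, w i) ≠ 0 := by
  -- We look for `w` among the multiples of `(1, …, n)` by a small complex number.
  have eventually_mul {m : ℂ} (hm : m ≠ 0) : ∀ᶠ t in 𝓝[≠] (0 : ℂ), f (m * t) ≠ 0 := by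
    refine eventually_ne_zero_of_differentiable (f := fun t ↦ f (m * t)) (by fun_prop)
      (fun h ↦ hf0 ?_) 0
    ext z
    simpa [mul_div_cancel₀ z hm] using congrFun h (z / m)
  have eventually_sub (i j : Fin n) :
      ∀ᶠ t in 𝓝[≠] (0 : ℂ), i ≠ j → f (((i : ℂ) - j) * t) ≠ 0 := by
    rcases eq_or_ne i j with rfl | hij
    · simp
    · have hm : (i : ℂ) - j ≠ 0 := by
        rw [sub_ne_zero]
        exact_mod_cast Fin.val_ne_of_ne hij
      exact (eventually_mul hm).mono fun t ht _ ↦ ht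
  have sum_ne_zero : ∑ i : Fin n, ((i : ℂ) + 1) ≠ 0 := by
    exact_mod_cast (Finset.sum_pos (fun (i : Fin n) _ ↦ i.val.succ_pos) Finset.univ_nonempty).ne'
  obtain ⟨t, ht_sub, ht_sum⟩ := ((Filter.eventually_all.2 fun i ↦
    Filter.eventually_all.2 (eventually_sub i)).and (eventually_mul sum_ne_zero)).exists
  refine ⟨fun i ↦ (i + 1) * t, fun i j hij ↦ ?_, by rwa [← Finset.sum_mul]⟩
  convert! ht_sub i j hij using 2
  ring

end EntireFunctions

section ThetaSeries

/-- The theta series `∑ₙ exp(πiτ(n+r)² + 2πi(n+r)z)` with characteristic `r`. -/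
def thetaChar (r τ z : ℂ) : ℂ :=
  ∑' n : ℤ, cexp (Real.pi * I * τ * (n + r) ^ 2 + 2 * Real.pi * I * (n + r) * z)

lemma thetaChar_term_eq (r τ z : ℂ) (n : ℤ) :
    cexp (Real.pi * I * τ * (n + r) ^ 2 + 2 * Real.pi * I * (n + r) * z) =
      cexp (Real.pi * I * τ * r ^ 2 + 2 * Real.pi * I * r * z) *
        jacobiTheta₂_term n (z + r * τ) τ := by
  rw [jacobiTheta₂_term, ← Complex.exp_add]
  ring_nf

lemma thetaChar_eq_jacobiTheta₂ (r τ z : ℂ) :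
    thetaChar r τ z = cexp (Real.pi * I * τ * r ^ 2 + 2 * Real.pi * I * r * z) *
      jacobiTheta₂ (z + r * τ) τ := by
  simp_rw [thetaChar, thetaChar_term_eq, tsum_mul_left, jacobiTheta₂]

lemma summable_thetaChar (r z : ℂ) {τ : ℂ} (hτ : 0 < τ.im) :
    Summable fun n : ℤ ↦
      cexp (Real.pi * I * τ * (n + r) ^ 2 + 2 * Real.pi * I * (n + r) * z) := by
  simp_rw [thetaChar_term_eq]
  exact ((summable_jacobiTheta₂_term_iff _ _).2 hτ).mul_left _

lemma thetaChar_periodic (τ z : ℂ) : Function.Periodic (fun r ↦ thetaChar r τ z) 1 := by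
  intro r
  simp only [thetaChar]
  rw [← (Equiv.addRight (1 : ℤ)).tsum_eq
    fun n : ℤ ↦ cexp (Real.pi * I * τ * (n + r) ^ 2 + 2 * Real.pi * I * (n + r) * z)]
  refine tsum_congr fun n ↦ ?_
  simp only [Equiv.coe_addRight]
  push_cast
  ring_nf

lemma thetaChar_add_one (r τ z : ℂ) :
    thetaChar r τ (z + 1) = cexp (2 * Real.pi * I * r) * thetaChar r τ z := by
  rw [thetaChar_eq_jacobiTheta₂, thetaChar_eq_jacobiTheta₂, add_right_comm,
    jacobiTheta₂_add_left, ← mul_assoc, ← Complex.exp_add]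
  ring_nf

lemma thetaChar_zero_add_one (τ z : ℂ) : thetaChar 0 τ (z + 1) = thetaChar 0 τ z := by
  simp [thetaChar_add_one]

lemma thetaChar_half_add_one (τ z : ℂ) : thetaChar (1 / 2) τ (z + 1) = -thetaChar (1 / 2) τ z := by
  rw [thetaChar_add_one, show 2 * Real.pi * I * (1 / 2) = Real.pi * I by ring,
    Complex.exp_pi_mul_I, neg_one_mul]

/-- The pairs of integers, split according to the parity of the sum:
`(k, l) ↦ (k + l, k - l)` and `(k, l) ↦ (k + l + 1, k - l)`. -/
def sumDiffEquiv : (ℤ × ℤ) ⊕ (ℤ × ℤ) ≃ ℤ × ℤ :=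
  Equiv.ofBijective
    (Sum.elim (fun p ↦ (p.1 + p.2, p.1 - p.2)) (fun p ↦ (p.1 + p.2 + 1, p.1 - p.2))) <| by
    constructor
    · rintro (⟨k, l⟩ | ⟨k, l⟩) (⟨k', l'⟩ | ⟨k', l'⟩) h <;>
        simp only [Sum.elim_inl, Sum.elim_inr, Prod.mk.injEq] at h <;>
        simp only [Sum.inl.injEq, Sum.inr.injEq, reduceCtorEq, Prod.mk.injEq] <;> omega
    · rintro ⟨n, m⟩
      rcases Int.emod_two_eq_zero_or_one (n + m) with h | h
      · exact ⟨.inl ((n + m) / 2, (n - m) / 2), by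
          simp only [Sum.elim_inl, Prod.mk.injEq]; omega⟩
      · exact ⟨.inr ((n + m - 1) / 2, (n - m - 1) / 2), by
          simp only [Sum.elim_inr, Prod.mk.injEq]; omega⟩

@[simp] lemma sumDiffEquiv_inl (p : ℤ × ℤ) :
    sumDiffEquiv (.inl p) = (p.1 + p.2, p.1 - p.2) := rfl

@[simp] lemma sumDiffEquiv_inr (p : ℤ × ℤ) :
    sumDiffEquiv (.inr p) = (p.1 + p.2 + 1, p.1 - p.2) := rfl

lemma thetaChar_mul_thetaChar (r s x y : ℂ) {τ : ℂ} (hτ : 0 < τ.im) :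
    thetaChar r τ x * thetaChar s τ y =
      thetaChar ((r + s) / 2) (2 * τ) (x + y) * thetaChar ((r - s) / 2) (2 * τ) (x - y) +
      thetaChar ((r + s + 1) / 2) (2 * τ) (x + y) *
        thetaChar ((r - s + 1) / 2) (2 * τ) (x - y) := by
  have h2τ : 0 < (2 * τ).im := by simpa using hτ
  have summable_norm (r z : ℂ) := (summable_thetaChar r z hτ).norm
  have summable_norm_two (r z : ℂ) := (summable_thetaChar r z h2τ).norm
  have summable_split := sumDiffEquiv.summable_iff.2 <|
    summable_mul_of_summable_norm (summable_norm r x) (summable_norm s y)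
  unfold thetaChar
  rw [tsum_mul_tsum_of_summable_norm (summable_norm _ _) (summable_norm _ _),
    tsum_mul_tsum_of_summable_norm (summable_norm_two _ _) (summable_norm_two _ _),
    tsum_mul_tsum_of_summable_norm (summable_norm_two _ _) (summable_norm_two _ _),
    ← sumDiffEquiv.tsum_eq]
  refine (Summable.tsum_sum (summable_split.comp_injective Sum.inl_injective)
    (summable_split.comp_injective Sum.inr_injective)).trans ?_
  congr 1 <;> refine tsum_congr fun p ↦ ?_ <;>
    simp only [sumDiffEquiv_inl, sumDiffEquiv_inr, Function.comp_apply, ← Complex.exp_add] <;>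
    push_cast <;> ring_nf

end ThetaSeries

section JacobiTheta

variable {τ : ℂ}

lemma θ_eq_thetaChar (τ z : ℂ) : θ τ z = -thetaChar (1 / 2) τ (z + 1 / 2) := by
  have shift : thetaChar (1 / 2) τ (z + 1 / 2) = thetaChar (-1 / 2) τ (z + 1 / 2) := by
    have periodic := thetaChar_periodic τ (z + 1 / 2) (-1 / 2)
    norm_num at periodic ⊢
    exact periodic
  rw [shift, θ, thetaChar, ← tsum_mul_left, ← tsum_neg]
  refine tsum_congr fun n ↦ ?_
  have sign_eq_exp : I * (-1 : ℂ) ^ n = -cexp (Real.pi * I * n + -(Real.pi / 2 * I)) := by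
    rw [Complex.exp_add, Complex.exp_neg, Complex.exp_pi_div_two_mul_I,
      mul_comm _ (n : ℂ), Complex.exp_int_mul, Complex.exp_pi_mul_I, Complex.inv_I]
    ring
  rw [← mul_assoc, ← mul_assoc, sign_eq_exp, neg_mul, neg_mul, ← Complex.exp_add,
    ← Complex.exp_add]
  ring_nf

lemma differentiable_θ (hτ : 0 < τ.im) : Differentiable ℂ (θ τ) := by
  have differentiable_jacobiTheta₂ : Differentiable ℂ fun z ↦ jacobiTheta₂ z τ :=
    fun z ↦ differentiableAt_jacobiTheta₂_fst z hτ
  have differentiable_comp :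
      Differentiable ℂ fun z ↦ jacobiTheta₂ (z + 1 / 2 + 1 / 2 * τ) τ :=
    differentiable_jacobiTheta₂.comp (g := fun z ↦ jacobiTheta₂ z τ) (by fun_prop)
  simp only [funext (θ_eq_thetaChar τ), thetaChar_eq_jacobiTheta₂]
  fun_prop

lemma integral_jacobiTheta₂_term (n : ℤ) (τ : ℂ) :
    ∫ x in (0 : ℝ)..1, jacobiTheta₂_term n x τ = if n = 0 then 1 else 0 := by
  have term_eq (x : ℝ) : jacobiTheta₂_term n x τ =
      cexp (Real.pi * I * n ^ 2 * τ) * cexp (2 * Real.pi * I * n * x) := by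
    rw [jacobiTheta₂_term, ← Complex.exp_add, add_comm]
  simp_rw [term_eq, intervalIntegral.integral_const_mul]
  split_ifs with hn
  · simp [hn]
  · have coeff_ne_zero : (2 * Real.pi * I * n : ℂ) ≠ 0 := by simp [hn]
    have exp_eq_one : cexp (2 * Real.pi * I * n) = 1 :=
      Complex.exp_eq_one_iff.2 ⟨n, by ring⟩
    rw [integral_exp_mul_complex coeff_ne_zero]
    simp [exp_eq_one]

lemma integral_jacobiTheta₂ (hτ : 0 < τ.im) :
    ∫ x in (0 : ℝ)..1, jacobiTheta₂ x τ = 1 := by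
  have hasSum_integral := intervalIntegral.hasSum_integral_of_dominated_convergence
    (μ := MeasureTheory.volume) (a := 0) (b := 1)
    (F := fun (n : ℤ) (x : ℝ) ↦ jacobiTheta₂_term n x τ)
    (f := fun x : ℝ ↦ jacobiTheta₂ x τ)
    (fun n _ ↦ ‖jacobiTheta₂_term n 0 τ‖)
    (fun n ↦ (by unfold jacobiTheta₂_term; fun_prop :
      Continuous fun x : ℝ ↦ jacobiTheta₂_term n x τ).aestronglyMeasurable)
    (fun n ↦ .of_forall fun x _ ↦ by simp [norm_jacobiTheta₂_term])
    (.of_forall fun x _ ↦ ((summable_jacobiTheta₂_term_iff 0 τ).2 hτ).norm)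
    (by simp)
    (.of_forall fun x _ ↦ hasSum_jacobiTheta₂_term x hτ)
  simp_rw [integral_jacobiTheta₂_term] at hasSum_integral
  exact hasSum_integral.unique (hasSum_ite_eq 0 1)

lemma θ_ne_zero (hτ : 0 < τ.im) : θ τ ≠ 0 := by
  intro h
  have jacobiTheta₂_eq_zero (z : ℂ) : jacobiTheta₂ z τ = 0 := by
    have hz := congrFun h (z - 1 / 2 - 1 / 2 * τ)
    rw [θ_eq_thetaChar, thetaChar_eq_jacobiTheta₂,
      show z - 1 / 2 - 1 / 2 * τ + 1 / 2 + 1 / 2 * τ = z by ring] at hz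
    simpa using hz
  simpa [jacobiTheta₂_eq_zero] using integral_jacobiTheta₂ hτ

lemma θ_mul_θ (hτ : 0 < τ.im) (u v : ℂ) :
    θ τ u * θ τ v =
      thetaChar 0 (2 * τ) (u + v) * thetaChar (1 / 2) (2 * τ) (u - v) -
        thetaChar (1 / 2) (2 * τ) (u + v) * thetaChar 0 (2 * τ) (u - v) := by
  have char_one (z : ℂ) : thetaChar 1 (2 * τ) z = thetaChar 0 (2 * τ) z := by
    simpa using thetaChar_periodic (2 * τ) z 0
  calc θ τ u * θ τ v
      = thetaChar (1 / 2) τ (u + 1 / 2) * thetaChar (1 / 2) τ (v + 1 / 2) := by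
        rw [θ_eq_thetaChar, θ_eq_thetaChar, neg_mul_neg]
    _ = thetaChar (1 / 2) (2 * τ) (u + v + 1) * thetaChar 0 (2 * τ) (u - v) +
          thetaChar 1 (2 * τ) (u + v + 1) * thetaChar (1 / 2) (2 * τ) (u - v) := by
        rw [thetaChar_mul_thetaChar _ _ _ _ hτ]
        ring_nf
    _ = _ := by
        rw [char_one, thetaChar_zero_add_one, thetaChar_half_add_one]
        ring

lemma θ_zero (hτ : 0 < τ.im) : θ τ 0 = 0 := by
  have h := θ_mul_θ hτ 0 0
  rw [mul_comm (thetaChar 0 _ _), add_zero, sub_zero, sub_self] at h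
  exact mul_self_eq_zero.1 h

/-- Weierstrass's identity: by `θ_mul_θ`, the Plücker relation for the four vectors
`(T₀(2t), T₁(2t))` with `t = x, y, z, w`. -/
lemma θ_three_term (hτ : 0 < τ.im) (x y z w : ℂ) :
    θ τ (x + z) * θ τ (x - z) * (θ τ (y + w) * θ τ (y - w)) -
      θ τ (x + w) * θ τ (x - w) * (θ τ (y + z) * θ τ (y - z)) =
    θ τ (x + y) * θ τ (x - y) * (θ τ (z + w) * θ τ (z - w)) := by
  simp only [θ_mul_θ hτ, add_add_sub_cancel, add_sub_sub_cancel]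
  ring

end JacobiTheta

section ReductionToCore

variable {τ : ℂ}

/-- The factor of `Fη` left after shifting the variables by `±η/2` and removing `θ(z₁ - z₂ + η)`
and a constant; it involves neither `η` nor `c₁, c₂`. -/
def relationCore (τ a b : ℂ) (p : ℂ × ℂ) : ℂ :=
  θ τ (p.1 + p.2 - a - b) *
    (θ τ (p.1 + a) * θ τ (p.1 + b) * (θ τ (p.2 + a) * θ τ (p.2 + b)))

/-- The span of the functions `relationCore τ a b`, isomorphic to `Rspace τ η` for every `η`. -/
def coreSpace (τ : ℂ) : Submodule ℂ (ℂ × ℂ → ℂ) :=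
  Submodule.span ℂ (Set.range fun q : ℂ × ℂ ↦ relationCore τ q.1 q.2)

/-- The operator which shifts the variables by `(-η/2, η/2)` and multiplies by `θ(z₁ - z₂ + η)`,
carrying `coreSpace τ` to `Rspace τ η`. -/
def shiftMul (τ η : ℂ) : (ℂ × ℂ → ℂ) →ₗ[ℂ] (ℂ × ℂ → ℂ) :=
  LinearMap.mulLeft ℂ (fun p : ℂ × ℂ ↦ θ τ (p.1 - p.2 + η)) ∘ₗ
    LinearMap.funLeft ℂ ℂ (· + (-(η / 2), η / 2))

lemma shiftMul_apply (τ η : ℂ) (φ : ℂ × ℂ → ℂ) (p : ℂ × ℂ) :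
    shiftMul τ η φ p = θ τ (p.1 - p.2 + η) * φ (p + (-(η / 2), η / 2)) := rfl

lemma Fη_eq_smul_shiftMul (hτ : 0 < τ.im) (η a b c₁ c₂ : ℂ) :
    (fun p : ℂ × ℂ ↦ Fη τ η a b c₁ c₂ p.1 p.2) =
      (θ τ (c₁ + c₂ + (a + b)) * θ τ (c₁ - c₂)) • shiftMul τ η (relationCore τ a b) := by
  ext ⟨z₁, z₂⟩
  have three_term := θ_three_term hτ (z₁ + η / 2 - (a + b) / 2) (z₂ - η / 2 - (a + b) / 2)
    (c₁ + (a + b) / 2) (c₂ + (a + b) / 2)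
  simp only [Fη, fV, shiftMul_apply, relationCore, Pi.smul_apply, smul_eq_mul, Prod.mk_add_mk]
  linear_combination (norm := ring_nf) θ τ (z₁ + (a - η / 2)) * θ τ (z₁ + (b - η / 2)) *
    (θ τ (z₂ + (a + η / 2)) * θ τ (z₂ + (b + η / 2))) * three_term

lemma exists_shiftMul_eq_smul_Fη (hτ : 0 < τ.im) (η a b : ℂ) :
    ∃ k c₁ c₂ : ℂ, shiftMul τ η (relationCore τ a b) =
      k • fun p : ℂ × ℂ ↦ Fη τ η a b c₁ c₂ p.1 p.2 := by
  obtain ⟨z, hz⟩ := Function.ne_iff.1 (θ_ne_zero hτ)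
  refine ⟨(θ τ z * θ τ z)⁻¹, z - (a + b) / 2, -(a + b) / 2, ?_⟩
  have sum_eq : z - (a + b) / 2 + -(a + b) / 2 + (a + b) = z := by ring
  have diff_eq : z - (a + b) / 2 - -(a + b) / 2 = z := by ring
  rw [Fη_eq_smul_shiftMul hτ, sum_eq, diff_eq, inv_smul_smul₀ (mul_ne_zero hz hz)]

lemma Rspace_eq_map_coreSpace (hτ : 0 < τ.im) (η : ℂ) :
    Rspace τ η = (coreSpace τ).map (shiftMul τ η) := by
  rw [coreSpace, Submodule.map_span]
  apply le_antisymm <;> refine Submodule.span_le.2 ?_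
  · rintro _ ⟨a, b, c₁, c₂, rfl⟩
    rw [Fη_eq_smul_shiftMul hτ]
    exact Submodule.smul_mem _ _ (Submodule.subset_span ⟨_, ⟨(a, b), rfl⟩, rfl⟩)
  · rintro _ ⟨_, ⟨⟨a, b⟩, rfl⟩, rfl⟩
    obtain ⟨k, c₁, c₂, h⟩ := exists_shiftMul_eq_smul_Fη hτ η a b
    rw [h]
    exact Submodule.smul_mem _ _ (Submodule.subset_span ⟨a, b, c₁, c₂, rfl⟩)

lemma continuous_of_mem_coreSpace (hτ : 0 < τ.im) {φ : ℂ × ℂ → ℂ} (hφ : φ ∈ coreSpace τ) :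
    Continuous φ := by
  have continuous_θ := (differentiable_θ hτ).continuous
  induction hφ using Submodule.span_induction with
  | mem φ hφ =>
    obtain ⟨q, rfl⟩ := hφ
    unfold relationCore
    fun_prop
  | zero => exact continuous_const
  | add φ ψ _ _ hφ hψ => exact hφ.add hψ
  | smul c φ _ hφ => exact hφ.const_smul c

lemma dense_setOf_θ_sub_add_ne_zero (hτ : 0 < τ.im) (η : ℂ) :
    Dense {p : ℂ × ℂ | θ τ (p.1 - p.2 + η) ≠ 0} := by
  have isOpenMap_sub : IsOpenMap (ContinuousLinearMap.fst ℂ ℂ ℂ - ContinuousLinearMap.snd ℂ ℂ ℂ) :=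
    ContinuousLinearMap.isOpenMap _ fun z ↦ ⟨(z, 0), by simp⟩
  exact (dense_setOf_ne_zero_of_differentiable (differentiable_θ hτ) (θ_ne_zero hτ)).preimage
    ((Homeomorph.addRight η).isOpenMap.comp isOpenMap_sub)

lemma injOn_shiftMul (hτ : 0 < τ.im) (η : ℂ) :
    Set.InjOn (shiftMul τ η) {φ | Continuous φ} := by
  intro φ (hφ : Continuous φ) ψ (hψ : Continuous ψ) h
  let shift := Homeomorph.addRight ((-(η / 2), η / 2) : ℂ × ℂ)
  have comp_eq : φ ∘ shift = ψ ∘ shift :=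
    Continuous.ext_on (dense_setOf_θ_sub_add_ne_zero hτ η) (hφ.comp shift.continuous)
      (hψ.comp shift.continuous) fun p hp ↦ mul_left_cancel₀ hp (congrFun h p)
  exact shift.surjective.injective_comp_right comp_eq

lemma rank_Rspace_eq_rank_coreSpace (hτ : 0 < τ.im) (η : ℂ) :
    Module.rank ℂ (Rspace τ η) = Module.rank ℂ (coreSpace τ) := by
  have injOn : Set.InjOn (shiftMul τ η) (coreSpace τ) :=
    (injOn_shiftMul hτ η).mono fun _ ↦ continuous_of_mem_coreSpace hτ
  rw [Rspace_eq_map_coreSpace hτ, ← LinearMap.range_domRestrict]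
  exact rank_range_of_injective _ (Set.injOn_iff_injective.1 injOn)

end ReductionToCore

section UpperBound

variable {τ : ℂ}

/-- The theta functions of degree `N`: the span of the `N` series `θ_{j/N}(Nz|Nτ)`. -/
def thetaSpace (N : ℕ) (τ : ℂ) : Submodule ℂ (ℂ → ℂ) :=
  Submodule.span ℂ (Set.range fun (j : Fin N) z ↦ thetaChar (j / N) (N * τ) (N * z))

instance finiteDimensional_thetaSpace (N : ℕ) (τ : ℂ) : FiniteDimensional ℂ (thetaSpace N τ) :=
  .span_of_finite ℂ (Set.finite_range _)

lemma finrank_thetaSpace_le (N : ℕ) (τ : ℂ) : Module.finrank ℂ (thetaSpace N τ) ≤ N :=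
  (finrank_range_le_card (R := ℂ) (M := ℂ → ℂ) _).trans_eq (Fintype.card_fin N)

lemma thetaChar_div_mem_thetaSpace (N : ℕ) [NeZero N] (k : ℤ) (τ : ℂ) :
    (fun z ↦ thetaChar (k / N) (N * τ) (N * z)) ∈ thetaSpace N τ := by
  have hN : (N : ℤ) ≠ 0 := by exact_mod_cast NeZero.ne N
  obtain ⟨j, hj⟩ : ∃ j : Fin N, (j : ℤ) = k % N :=
    ⟨⟨(k % N).toNat, by have := k.emod_lt_of_pos (b := N) (by omega); omega⟩,
      Int.toNat_of_nonneg (k.emod_nonneg hN)⟩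
  have div_eq : (k : ℂ) / N = j / N + (k / N : ℤ) * 1 := by
    have hk : (k : ℂ) = j + N * (k / N : ℤ) := by
      exact_mod_cast hj ▸ (k.emod_add_mul_ediv N).symm
    have hN' : (N : ℂ) ≠ 0 := NeZero.ne _
    rw [hk]
    field_simp
  refine Submodule.subset_span ⟨j, funext fun z ↦ ?_⟩
  simp only [div_eq]
  exact ((thetaChar_periodic (N * τ) (N * z)).int_mul (k / N) _).symm

lemma thetaChar_mul_thetaChar_mem_thetaSpace (hτ : 0 < τ.im) (m n : ℤ) (c : ℂ) :
    (fun z ↦ thetaChar (m / 2) (2 * τ) (2 * z + c) * thetaChar (n / 2) (2 * τ) (2 * z - c)) ∈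
      thetaSpace 4 τ := by
  have mem (k : ℤ) := thetaChar_div_mem_thetaSpace 4 k τ
  convert! add_mem
    (Submodule.smul_mem _ (thetaChar ((m / 2 - n / 2) / 2) (2 * (2 * τ)) (2 * c)) (mem (m + n)))
    (Submodule.smul_mem _ (thetaChar ((m / 2 - n / 2 + 1) / 2) (2 * (2 * τ)) (2 * c))
      (mem (m + n + 2))) using 1
  ext z
  have h2τ : 0 < (2 * τ).im := by simpa using hτ
  rw [thetaChar_mul_thetaChar _ _ _ _ h2τ]
  simp only [Pi.add_apply, Pi.smul_apply, smul_eq_mul]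
  push_cast
  ring_nf

lemma fV_mem_thetaSpace (hτ : 0 < τ.im) (α β γ : ℂ) : fV τ α β γ ∈ thetaSpace 4 τ := by
  let T₀ := thetaChar 0 (2 * τ)
  let T₁ := thetaChar (1 / 2) (2 * τ)
  let c := α + β
  let δ := α - β
  let ε := 2 * γ + α + β
  have mem (m n : ℤ) := thetaChar_mul_thetaChar_mem_thetaSpace hτ m n (α + β)
  have h₀₀ : (fun z ↦ T₀ (2 * z + c) * T₀ (2 * z - c)) ∈ thetaSpace 4 τ := by
    simpa [T₀, T₁, c] using mem 0 0
  have h₀₁ : (fun z ↦ T₀ (2 * z + c) * T₁ (2 * z - c)) ∈ thetaSpace 4 τ := by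
    simpa [T₀, T₁, c] using mem 0 1
  have h₁₀ : (fun z ↦ T₁ (2 * z + c) * T₀ (2 * z - c)) ∈ thetaSpace 4 τ := by
    simpa [T₀, T₁, c] using mem 1 0
  have h₁₁ : (fun z ↦ T₁ (2 * z + c) * T₁ (2 * z - c)) ∈ thetaSpace 4 τ := by
    simpa [T₀, T₁, c] using mem 1 1
  have θ_mul_θ_left (z : ℂ) : θ τ (z + α) * θ τ (z + β) =
      T₀ (2 * z + c) * T₁ δ - T₁ (2 * z + c) * T₀ δ := by
    rw [θ_mul_θ hτ]
    simp only [T₀, T₁, c, δ]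
    ring_nf
  have θ_mul_θ_right (z : ℂ) : θ τ (z + γ) * θ τ (z - α - β - γ) =
      T₀ (2 * z - c) * T₁ ε - T₁ (2 * z - c) * T₀ ε := by
    rw [θ_mul_θ hτ]
    simp only [T₀, T₁, c, ε]
    ring_nf
  have fV_eq : fV τ α β γ =
      (T₁ δ * T₁ ε) • (fun z ↦ T₀ (2 * z + c) * T₀ (2 * z - c)) -
        (T₁ δ * T₀ ε) • (fun z ↦ T₀ (2 * z + c) * T₁ (2 * z - c)) -
        (T₀ δ * T₁ ε) • (fun z ↦ T₁ (2 * z + c) * T₀ (2 * z - c)) +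
        (T₀ δ * T₀ ε) • (fun z ↦ T₁ (2 * z + c) * T₁ (2 * z - c)) := by
    ext z
    rw [fV, mul_assoc, θ_mul_θ_left, θ_mul_θ_right]
    simp only [Pi.add_apply, Pi.sub_apply, Pi.smul_apply, smul_eq_mul]
    ring
  rw [fV_eq]
  exact add_mem (sub_mem (sub_mem (Submodule.smul_mem _ _ h₀₀) (Submodule.smul_mem _ _ h₀₁))
    (Submodule.smul_mem _ _ h₁₀)) (Submodule.smul_mem _ _ h₁₁)

lemma rank_Rspace_zero_le (hτ : 0 < τ.im) : Module.rank ℂ (Rspace τ 0) ≤ 6 := by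
  have Rspace_le : Rspace τ 0 ≤ Submodule.span ℂ {F | ∃ v : Fin 2 → ℂ → ℂ,
      (∀ i, v i ∈ thetaSpace 4 τ) ∧ antisymmProd ℂ ℂ v = F} := by
    refine Submodule.span_mono ?_
    rintro _ ⟨a, b, c₁, c₂, rfl⟩
    refine ⟨![fV τ a b c₁, fV τ a b c₂], ?_, ?_⟩
    · simp [Fin.forall_fin_two, fV_mem_thetaSpace hτ]
    · ext p
      simp [Fη]
  calc Module.rank ℂ (Rspace τ 0)
      ≤ (Module.finrank ℂ (thetaSpace 4 τ)).choose 2 :=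
        (Submodule.rank_mono Rspace_le).trans (rank_span_alternatingMap_le _ _)
    _ ≤ (Nat.choose 4 2 : ℕ) := by
        exact_mod_cast Nat.choose_le_choose 2 (finrank_thetaSpace_le 4 τ)
    _ = 6 := by norm_num [Nat.choose]

end UpperBound

section LowerBound

variable {τ : ℂ}

/-- The two-element subsets of `Fin 4`, as increasing pairs. -/
abbrev IncreasingPair : Type := {p : Fin 4 × Fin 4 // p.1 < p.2}

lemma relationCore_ne_zero_iff (hτ : 0 < τ.im) {w : Fin 4 → ℂ}
    (hw_sub : ∀ i j, i ≠ j → θ τ (w i - w j) ≠ 0) (hw_sum : θ τ (∑ i, w i) ≠ 0)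
    (p q : IncreasingPair) :
    relationCore τ (-w p.1.1) (-w p.1.2) (w q.1.1, w q.1.2) ≠ 0 ↔
      Function.Injective ![q.1.1, q.1.2, p.1.1, p.1.2] := by
  have θ_sub_ne_zero_iff (i j : Fin 4) : θ τ (w i + -w j) ≠ 0 ↔ i ≠ j := by
    rw [← sub_eq_add_neg]
    refine ⟨?_, hw_sub i j⟩
    rintro h rfl
    exact h (by rw [sub_self, θ_zero hτ])
  have injective_iff : Function.Injective ![q.1.1, q.1.2, p.1.1, p.1.2] ↔
      (q.1.1 ≠ p.1.1 ∧ q.1.1 ≠ p.1.2) ∧ q.1.2 ≠ p.1.1 ∧ q.1.2 ≠ p.1.2 := by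
    decide +revert
  have sum_eq (h : Function.Injective ![q.1.1, q.1.2, p.1.1, p.1.2]) :
      w q.1.1 + w q.1.2 - -w p.1.1 - -w p.1.2 = ∑ i, w i := by
    rw [← (Finite.injective_iff_bijective.1 h).sum_comp w, Fin.sum_univ_four]
    simp [add_assoc]
  simp only [relationCore, mul_ne_zero_iff, θ_sub_ne_zero_iff, ← injective_iff,
    and_iff_right_iff_imp]
  intro h
  rwa [sum_eq h]

lemma exists_forall_injective_iff_eq (p : IncreasingPair) :
    ∃ q : IncreasingPair, ∀ p' : IncreasingPair,
      Function.Injective ![q.1.1, q.1.2, p'.1.1, p'.1.2] ↔ p' = p := by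
  decide +revert

lemma le_rank_coreSpace (hτ : 0 < τ.im) : 6 ≤ Module.rank ℂ (coreSpace τ) := by
  obtain ⟨w, hw_sub, hw_sum⟩ :=
    exists_forall_sub_ne_zero_and_sum_ne_zero (differentiable_θ hτ) (θ_ne_zero hτ) 4
  let v (p : IncreasingPair) : ℂ × ℂ → ℂ := relationCore τ (-w p.1.1) (-w p.1.2)
  have linearIndependent_v : LinearIndependent ℂ v := by
    refine linearIndependent_of_forall_exists_dual fun p ↦ ?_
    obtain ⟨q, hq⟩ := exists_forall_injective_iff_eq p
    have eval_ne_zero_iff (p' : IncreasingPair) : v p' (w q.1.1, w q.1.2) ≠ 0 ↔ p' = p :=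
      (relationCore_ne_zero_iff hτ hw_sub hw_sum p' q).trans (hq p')
    exact ⟨LinearMap.proj (w q.1.1, w q.1.2), (eval_ne_zero_iff p).2 rfl,
      fun p' hp' ↦ not_not.1 (mt (eval_ne_zero_iff p').1 hp')⟩
  have span_le : Submodule.span ℂ (Set.range v) ≤ coreSpace τ :=
    Submodule.span_mono (Set.range_subset_iff.2 fun p ↦ ⟨(-w p.1.1, -w p.1.2), rfl⟩)
  calc (6 : Cardinal)
      = Cardinal.mk IncreasingPair := by
        rw [Cardinal.mk_fintype, show Fintype.card IncreasingPair = 6 by decide]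
        norm_num
    _ = Module.rank ℂ (Submodule.span ℂ (Set.range v)) := by
        rw [rank_span linearIndependent_v, Cardinal.mk_range_eq _ linearIndependent_v.injective]
    _ ≤ Module.rank ℂ (coreSpace τ) := Submodule.rank_mono span_le

end LowerBound

/-- Lemma B.1: for every `η ∈ ℂ` the relation space `R_η` is
6-dimensional. -/
theorem statement16 (τ : ℂ) (hτ : 0 < τ.im) (η : ℂ) :
    Module.rank ℂ ↥(Rspace τ η) = 6 := by
  rw [rank_Rspace_eq_rank_coreSpace hτ η]
  refine le_antisymm ?_ (le_rank_coreSpace hτ)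
  rw [← rank_Rspace_eq_rank_coreSpace hτ 0]
  exact rank_Rspace_zero_le hτ
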